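/- arXiv:2104.02680 — 7 statements merged into one kernel-verified Lean document; each statement's English description precedes it below -/
import Mathlib

section
/- Let X ⊂ ℝ^d be a finite set and λ_c > 0, and let 𝒞 be a partition of X into nonempty clusters that minimizes the regularized k-means energy E(X,·,λ_c) over all partitions of X into nonempty clusters. Then for every cluster C ∈ 𝒞 and every x ∈ C, ‖c̄ − x‖² ≤ λ_c (1 − 1/|C| + 1/|C|²) ≤ λ_c; in particular, max_{x∈C} ‖c̄ − x‖² ≤ λ_c. -/
/-!
Splitting a point `x` off its cluster `C`, where `n = |C| ≥ 2`, gives a competitor of the minimizer.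
It raises the regularization term by `λ (1 + 1/(n-1) - 1/n)`, and by the parallel axis identity
`sum_norm_sub_sq` it lowers the sum of squared deviations by `n/(n-1) ‖c̄ - x‖²` (`sum_sq_erase`).
Minimality gives `n/(n-1) ‖c̄ - x‖² ≤ λ (1 + 1/(n-1) - 1/n)`, which is the claimed bound after
division by `n/(n-1)`. For `n = 1` the distance vanishes and the bound is `λ`.
-/

open scoped BigOperators Classical

/-- The centroid of a finite set of points in `ℝ^d`. -/
noncomputable def centroid {d : ℕ} (C : Finset (EuclideanSpace ℝ (Fin d))) :
    EuclideanSpace ℝ (Fin d) :=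
  (C.card : ℝ)⁻¹ • ∑ x ∈ C, x

/-- The variance of a finite set of points in `ℝ^d`. -/
noncomputable def clVar {d : ℕ} (C : Finset (EuclideanSpace ℝ (Fin d))) : ℝ :=
  (C.card : ℝ)⁻¹ * ∑ x ∈ C, ‖centroid C - x‖ ^ 2

/-- `𝒢` is a partition of `X` into nonempty clusters. -/
def IsPartition {d : ℕ} (X : Finset (EuclideanSpace ℝ (Fin d)))
    (𝒢 : Finset (Finset (EuclideanSpace ℝ (Fin d)))) : Prop :=
  (∀ C ∈ 𝒢, C.Nonempty) ∧
  (∀ C ∈ 𝒢, ∀ D ∈ 𝒢, C ≠ D → Disjoint C D) ∧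
  𝒢.biUnion id = X

/-- The regularized k-means energy of a partition `𝒢` with parameter `lam`:
`E(X,𝒢,λ) = λ Σ_i 1/|G_i| + Σ_i Σ_{x ∈ G_i} ‖ḡ_i − x‖²`. -/
noncomputable def energy {d : ℕ} (𝒢 : Finset (Finset (EuclideanSpace ℝ (Fin d))))
    (lam : ℝ) : ℝ :=
  lam * ∑ C ∈ 𝒢, (C.card : ℝ)⁻¹ + ∑ C ∈ 𝒢, ∑ x ∈ C, ‖centroid C - x‖ ^ 2

/-- Parallel axis identity: the sum of squared distances from the points of `D` to `p` is minimal
at the centroid, and exceeds its minimum by `|D| ‖p - centroid D‖²`. -/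
lemma sum_norm_sub_sq {d : ℕ} (D : Finset (EuclideanSpace ℝ (Fin d))) (hD : D.Nonempty)
    (p : EuclideanSpace ℝ (Fin d)) :
    ∑ y ∈ D, ‖p - y‖ ^ 2 =
      ∑ y ∈ D, ‖centroid D - y‖ ^ 2 + (D.card : ℝ) * ‖p - centroid D‖ ^ 2 := by
  have hc : (D.card : ℝ) ≠ 0 := by exact_mod_cast hD.card_pos.ne'
  have h0 : ∑ y ∈ D, (centroid D - y) = 0 := by
    rw [Finset.sum_sub_distrib, Finset.sum_const, ← Nat.cast_smul_eq_nsmul ℝ, centroid,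
      smul_inv_smul₀ hc, sub_self]
  have h1 : ∀ y ∈ D, ‖p - y‖ ^ 2 = ‖centroid D - y‖ ^ 2 + ‖p - centroid D‖ ^ 2
      + 2 * inner ℝ (p - centroid D) (centroid D - y) := by
    intro y _
    rw [← sub_add_sub_cancel p (centroid D) y, norm_add_sq_real]
    ring
  rw [Finset.sum_congr rfl h1, Finset.sum_add_distrib, Finset.sum_add_distrib, ← Finset.mul_sum,
    ← inner_sum, h0, inner_zero_right, Finset.sum_const, nsmul_eq_mul]
  ring

/-- Removing `x` from a cluster `C` with at least two points lowers its sum of squared deviations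
by `|C| / (|C| - 1) * ‖centroid C - x‖²`. -/
lemma sum_sq_erase {d : ℕ} (C : Finset (EuclideanSpace ℝ (Fin d)))
    (x : EuclideanSpace ℝ (Fin d)) (hx : x ∈ C) (hD : (C.erase x).Nonempty) :
    ∑ y ∈ C, ‖centroid C - y‖ ^ 2 =
      ∑ y ∈ C.erase x, ‖centroid (C.erase x) - y‖ ^ 2
        + (1 + ((C.erase x).card : ℝ)⁻¹) * ‖centroid C - x‖ ^ 2 := by
  have hm : ((C.erase x).card : ℝ) ≠ 0 := by exact_mod_cast hD.card_pos.ne'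
  have hn : (C.card : ℝ) = (C.erase x).card + 1 := by
    exact_mod_cast (Finset.card_erase_add_one hx).symm
  have hn0 : (C.card : ℝ) ≠ 0 := by exact_mod_cast (Finset.card_pos.mpr ⟨x, hx⟩).ne'
  have hcC : (C.card : ℝ) • centroid C = ∑ y ∈ C.erase x, y + x := by
    rw [centroid, smul_inv_smul₀ hn0, Finset.sum_erase_add _ _ hx]
  have hcD : ((C.erase x).card : ℝ) • centroid (C.erase x) = ∑ y ∈ C.erase x, y := by
    rw [centroid, smul_inv_smul₀ hm]
  -- The new centroid is the old one moved away from `x` by `‖centroid C - x‖ / (|C| - 1)`.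
  have hdiff : centroid C - centroid (C.erase x)
      = (-((C.erase x).card : ℝ)⁻¹) • (centroid C - x) := by
    apply smul_right_injective _ hm
    simp only [smul_smul, mul_neg, mul_inv_cancel₀ hm]
    rw [hn, add_smul, one_smul, ← hcD] at hcC
    rw [smul_sub, eq_sub_of_add_eq hcC]
    module
  rw [← Finset.sum_erase_add _ _ hx, sum_norm_sub_sq _ hD, hdiff, norm_smul, mul_pow,
    Real.norm_eq_abs, sq_abs]
  field_simp
  ring

/-- Splitting the point `x` off its cluster yields a partition again. -/
lemma isPartition_split {d : ℕ} {X : Finset (EuclideanSpace ℝ (Fin d))}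
    {𝒞 : Finset (Finset (EuclideanSpace ℝ (Fin d)))} (hpart : IsPartition X 𝒞)
    {C : Finset (EuclideanSpace ℝ (Fin d))} (hC : C ∈ 𝒞) {x : EuclideanSpace ℝ (Fin d)}
    (hx : x ∈ C) (hD : (C.erase x).Nonempty) :
    IsPartition X (insert {x} (insert (C.erase x) (𝒞.erase C))) := by
  obtain ⟨hne, hdis, hun⟩ := hpart
  have hxD : Disjoint {x} (C.erase x) := by simp
  have hxG : ∀ G ∈ 𝒞.erase C, Disjoint {x} G := fun G hG =>
    (hdis C hC G (Finset.mem_of_mem_erase hG) (Finset.ne_of_mem_erase hG).symm).mono_left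
      (Finset.singleton_subset_iff.mpr hx)
  have hDG : ∀ G ∈ 𝒞.erase C, Disjoint (C.erase x) G := fun G hG =>
    (hdis C hC G (Finset.mem_of_mem_erase hG) (Finset.ne_of_mem_erase hG).symm).mono_left
      (Finset.erase_subset _ _)
  refine ⟨?_, ?_, ?_⟩
  · intro G hG
    rcases Finset.mem_insert.mp hG with rfl | hG
    · exact Finset.singleton_nonempty x
    rcases Finset.mem_insert.mp hG with rfl | hG
    · exact hD
    · exact hne G (Finset.mem_of_mem_erase hG)
  · intro G hG H hH hGH
    rcases Finset.mem_insert.mp hG with rfl | hG <;> rcases Finset.mem_insert.mp hH with rfl | hH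
    · exact absurd rfl hGH
    · rcases Finset.mem_insert.mp hH with rfl | hH
      · exact hxD
      · exact hxG H hH
    · rcases Finset.mem_insert.mp hG with rfl | hG
      · exact hxD.symm
      · exact (hxG G hG).symm
    · rcases Finset.mem_insert.mp hG with rfl | hG <;> rcases Finset.mem_insert.mp hH with rfl | hH
      · exact absurd rfl hGH
      · exact hDG H hH
      · exact (hDG G hG).symm
      · exact hdis G (Finset.mem_of_mem_erase hG) H (Finset.mem_of_mem_erase hH) hGH
  · rw [Finset.biUnion_insert, Finset.biUnion_insert, ← hun, ← Finset.insert_erase hC,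
      Finset.biUnion_insert, Finset.erase_insert_eq_erase, Finset.erase_idem, ← Finset.union_assoc]
    congr 1
    simp only [id, ← Finset.insert_eq, Finset.insert_erase hx]

/-- An additive functional of the clusters changes only in the terms of the split cluster. -/
lemma sum_split {d : ℕ} {X : Finset (EuclideanSpace ℝ (Fin d))}
    {𝒞 : Finset (Finset (EuclideanSpace ℝ (Fin d)))} (hpart : IsPartition X 𝒞)
    {C : Finset (EuclideanSpace ℝ (Fin d))} (hC : C ∈ 𝒞) {x : EuclideanSpace ℝ (Fin d)}
    (hx : x ∈ C) (hD : (C.erase x).Nonempty) (f : Finset (EuclideanSpace ℝ (Fin d)) → ℝ) :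
    ∑ G ∈ insert {x} (insert (C.erase x) (𝒞.erase C)), f G + f C
      = ∑ G ∈ 𝒞, f G + f {x} + f (C.erase x) := by
  obtain ⟨-, hdis, -⟩ := hpart
  -- A nonempty subset of `C` is not one of the other clusters.
  have hnot : ∀ S ⊆ C, S.Nonempty → S ∉ 𝒞.erase C := by
    rintro S hS ⟨y, hy⟩ hmem
    exact Finset.disjoint_left.mp (hdis C hC S (Finset.mem_of_mem_erase hmem)
      (Finset.ne_of_mem_erase hmem).symm) (hS hy) hy
  have h2 : C.erase x ∉ 𝒞.erase C := hnot _ (Finset.erase_subset _ _) hD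
  have h1 : {x} ∉ insert (C.erase x) (𝒞.erase C) := by
    rw [Finset.mem_insert, not_or]
    refine ⟨fun h => ?_, hnot _ (Finset.singleton_subset_iff.mpr hx) (Finset.singleton_nonempty x)⟩
    exact Finset.notMem_erase x C (h ▸ Finset.mem_singleton_self x)
  rw [Finset.sum_insert h1, Finset.sum_insert h2, ← Finset.add_sum_erase _ _ hC]
  ring

lemma centroid_singleton {d : ℕ} (x : EuclideanSpace ℝ (Fin d)) : centroid {x} = x := by
  simp [centroid]

/-- Lemma 4.1: for a minimizer of the regularized k-means energy, every point of every
cluster is within squared distance `λ_c (1 − 1/|C| + 1/|C|²) ≤ λ_c` of its centroid. -/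
theorem stmt0 {d : ℕ} (X : Finset (EuclideanSpace ℝ (Fin d))) (lamc : ℝ) (hlam : 0 < lamc)
    (𝒞 : Finset (Finset (EuclideanSpace ℝ (Fin d))))
    (hpart : IsPartition X 𝒞)
    (hmin : ∀ 𝒞' : Finset (Finset (EuclideanSpace ℝ (Fin d))),
      IsPartition X 𝒞' → energy 𝒞 lamc ≤ energy 𝒞' lamc) :
    ∀ C ∈ 𝒞, ∀ x ∈ C,
      ‖centroid C - x‖ ^ 2 ≤ lamc * (1 - 1 / (C.card : ℝ) + 1 / (C.card : ℝ) ^ 2) ∧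
      lamc * (1 - 1 / (C.card : ℝ) + 1 / (C.card : ℝ) ^ 2) ≤ lamc := by
  intro C hC x hx
  have hn1 : (1 : ℝ) ≤ C.card := by exact_mod_cast Finset.card_pos.mpr ⟨x, hx⟩
  refine ⟨?_, ?_⟩
  · rcases (C.erase x).eq_empty_or_nonempty with hD | hD
    · have hCx : C = {x} := by rw [← Finset.insert_erase hx, hD]; rfl
      subst hCx
      simp [centroid_singleton, hlam.le]
    · have hE := hmin _ (isPartition_split hpart hC hx hD)
      have hcard := sum_split hpart hC hx hD fun G => (G.card : ℝ)⁻¹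
      have hvar := sum_split hpart hC hx hD fun G => ∑ y ∈ G, ‖centroid G - y‖ ^ 2
      have hdrop := sum_sq_erase C x hx hD
      have hn : (C.card : ℝ) = (C.erase x).card + 1 := by
        exact_mod_cast (Finset.card_erase_add_one hx).symm
      have hm : (0 : ℝ) < (C.erase x).card := by exact_mod_cast hD.card_pos
      simp only [Finset.card_singleton, Nat.cast_one, inv_one, Finset.sum_singleton,
        centroid_singleton, sub_self, norm_zero] at hcard hvar
      unfold energy at hE
      rw [eq_sub_of_add_eq hcard, eq_sub_of_add_eq hvar] at hE
      rw [hn] at hE ⊢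
      generalize ((C.erase x).card : ℝ) = m at *
      generalize ‖centroid C - x‖ ^ 2 = r at *
      have key : (1 + m⁻¹) * r ≤ lamc * (1 + m⁻¹ - (m + 1)⁻¹) := by
        linarith
      have hfac : lamc * (1 + m⁻¹ - (m + 1)⁻¹)
          = (1 + m⁻¹) * (lamc * (1 - 1 / (m + 1) + 1 / (m + 1) ^ 2)) := by
        field_simp
        ring
      rw [hfac] at key
      exact le_of_mul_le_mul_left key (by positivity)
  · have h : 1 / (C.card : ℝ) ^ 2 ≤ 1 / (C.card : ℝ) :=
      one_div_le_one_div_of_le (by linarith) (by nlinarith)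
    nlinarith
end

section
/- Let X ⊂ ℝ^d be a finite set and λ_c > 0, and let 𝒞 be a partition of X into nonempty clusters that minimizes the regularized k-means energy E(X,·,λ_c) over all partitions of X into nonempty clusters. Then every cluster C ∈ 𝒞 satisfies Var(C) ≤ λ_c. -/
/-!
Shatter a cluster `C` with `n` points into its `n` singletons and leave the other clusters alone.
A singleton contributes `1` to the size sum and nothing to the squared-distance sum, so minimality
gives `λ / n + n * Var C ≤ λ * n`, whence `Var C ≤ λ * (1 - 1 / n ^ 2) ≤ λ`. The partition is
`shatter 𝒞 C`; `isPartition_shatter` shows it is admissible, and `energy_shatter` and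
`energy_erase_add` compare the two energies.
-/

open scoped BigOperators Classical

/-- The family obtained from `𝒞` by replacing the cluster `C` with the singletons of its points. -/
noncomputable def shatter {d : ℕ} (𝒞 : Finset (Finset (EuclideanSpace ℝ (Fin d))))
    (C : Finset (EuclideanSpace ℝ (Fin d))) : Finset (Finset (EuclideanSpace ℝ (Fin d))) :=
  𝒞.erase C ∪ C.image (fun x => {x})

lemma isPartition_shatter {d : ℕ} {X : Finset (EuclideanSpace ℝ (Fin d))}
    {𝒞 : Finset (Finset (EuclideanSpace ℝ (Fin d)))} (h : IsPartition X 𝒞)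
    {C : Finset (EuclideanSpace ℝ (Fin d))} (hC : C ∈ 𝒞) : IsPartition X (shatter 𝒞 C) := by
  obtain ⟨hne, hdisj, hX⟩ := h
  refine ⟨?_, ?_, ?_⟩
  · intro D hD
    simp only [shatter, Finset.mem_union, Finset.mem_erase, Finset.mem_image] at hD
    rcases hD with ⟨-, hD⟩ | ⟨x, -, rfl⟩
    · exact hne D hD
    · exact Finset.singleton_nonempty x
  · intro D hD E hE hDE
    simp only [shatter, Finset.mem_union, Finset.mem_erase, Finset.mem_image] at hD hE
    rcases hD with ⟨hDC, hD⟩ | ⟨x, hx, rfl⟩ <;> rcases hE with ⟨hEC, hE⟩ | ⟨y, hy, rfl⟩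
    · exact hdisj D hD E hE hDE
    · exact (hdisj D hD C hC hDC).mono_right (Finset.singleton_subset_iff.2 hy)
    · exact (hdisj C hC E hE hEC.symm).mono_left (Finset.singleton_subset_iff.2 hx)
    · exact Finset.disjoint_singleton.2 fun hxy => hDE (by rw [hxy])
  · rw [← hX]
    conv_rhs => rw [← Finset.insert_erase hC, Finset.biUnion_insert, Finset.union_comm]
    rw [shatter, Finset.union_biUnion, Finset.image_biUnion]
    congr 1
    exact Finset.biUnion_singleton_eq_self

/-- The erased family and the singletons share no member, because a cluster `{x}` with `x ∈ C`
would meet `C` and hence be `C` itself; so the energy is additive over the two parts. -/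
lemma energy_shatter {d : ℕ} {X : Finset (EuclideanSpace ℝ (Fin d))}
    {𝒞 : Finset (Finset (EuclideanSpace ℝ (Fin d)))} (h : IsPartition X 𝒞)
    {C : Finset (EuclideanSpace ℝ (Fin d))} (hC : C ∈ 𝒞) (lam : ℝ) :
    energy (shatter 𝒞 C) lam = energy (𝒞.erase C) lam + lam * C.card := by
  have hd : Disjoint (𝒞.erase C) (C.image (fun x => ({x} : Finset _))) := by
    rw [Finset.disjoint_left]
    intro D hD hD'
    obtain ⟨hDC, hD⟩ := Finset.mem_erase.1 hD
    obtain ⟨x, hx, rfl⟩ := Finset.mem_image.1 hD'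
    exact Finset.disjoint_left.1 (h.2.1 _ hD C hC hDC) (Finset.mem_singleton_self x) hx
  have hinj : Set.InjOn (fun x => ({x} : Finset (EuclideanSpace ℝ (Fin d)))) C :=
    Finset.singleton_injective.injOn
  rw [energy, energy, shatter, Finset.sum_union hd, Finset.sum_union hd,
    Finset.sum_image hinj, Finset.sum_image hinj]
  simp only [centroid, Finset.card_singleton, Finset.sum_singleton, Nat.cast_one, inv_one,
    one_smul, sub_self, norm_zero, Finset.sum_const, nsmul_eq_mul, mul_one]
  norm_num
  ring

lemma energy_erase_add {d : ℕ} {𝒞 : Finset (Finset (EuclideanSpace ℝ (Fin d)))}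
    {C : Finset (EuclideanSpace ℝ (Fin d))} (hC : C ∈ 𝒞) (lam : ℝ) :
    energy 𝒞 lam = energy (𝒞.erase C) lam +
      (lam * (C.card : ℝ)⁻¹ + ∑ x ∈ C, ‖centroid C - x‖ ^ 2) := by
  rw [energy, energy, ← Finset.sum_erase_add _ _ hC, ← Finset.sum_erase_add _ _ hC]
  ring

/-- Corollary 4.2: for a minimizer of the regularized k-means energy, every cluster
has variance at most `λ_c`. -/
theorem stmt1 {d : ℕ} (X : Finset (EuclideanSpace ℝ (Fin d))) (lamc : ℝ) (hlam : 0 < lamc)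
    (𝒞 : Finset (Finset (EuclideanSpace ℝ (Fin d))))
    (hpart : IsPartition X 𝒞)
    (hmin : ∀ 𝒞' : Finset (Finset (EuclideanSpace ℝ (Fin d))),
      IsPartition X 𝒞' → energy 𝒞 lamc ≤ energy 𝒞' lamc) :
    ∀ C ∈ 𝒞, clVar C ≤ lamc := by
  intro C hC
  have hle := hmin _ (isPartition_shatter hpart hC)
  rw [energy_shatter hpart hC, energy_erase_add hC] at hle
  have hn : (0 : ℝ) < C.card := by exact_mod_cast (hpart.1 C hC).card_pos
  have hpos : 0 < lamc * (C.card : ℝ)⁻¹ := by positivity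
  rw [clVar, inv_mul_le_iff₀ hn]
  linarith
end

section
/- Let 𝒞 be a finite collection of pairwise disjoint nonempty finite subsets of ℝ^d, let λ_g > 0, and let 𝒢 be a grouping of 𝒞 that minimizes the regularized set k-means energy E_g(𝒞,·,λ_g) over all groupings of 𝒞. Then for every group G ∈ 𝒢 and every cluster C ∈ G, ‖ḡ − c̄‖² ≤ λ_g (1/|C|² − 1/(|C|·|G|) + 1/|G|²) ≤ λ_g/|C|², where c̄ is the centroid of C and ḡ is the centroid of the union of the clusters in G. -/
/-!
The bound comes from comparing `𝒢` with the grouping in which `C` is split off from `G`, that is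
`G` is replaced by the two groups `{C}` and `H = G \ {C}` (if `G = {C}`, both centroids agree and
there is nothing to compare). Write `m = |C|`, `n = |G|` and `r = n - m = |H|`. The regularizer
grows by `λ (1/m + 1/r - 1/n)`. By the parallel axis identity (`sum_weighted_sq_shift`) and the
balance `m (ḡ - c̄) + r (ḡ - h̄) = 0`, the quadratic part drops by
`m ‖ḡ - c̄‖² + r ‖ḡ - h̄‖² = (m n / r) ‖ḡ - c̄‖²`. Minimality says that the drop is at most the
growth, and multiplying by `r / (m n)` gives exactly `λ (1/m² - 1/(m n) + 1/n²)`.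
-/

open scoped BigOperators Classical

/-- The size of a group of clusters: the total number of points in its clusters. -/
def groupSize {d : ℕ} (G : Finset (Finset (EuclideanSpace ℝ (Fin d)))) : ℕ :=
  ∑ C ∈ G, C.card

/-- The union of the clusters in a group. -/
noncomputable def groupUnion {d : ℕ} (G : Finset (Finset (EuclideanSpace ℝ (Fin d)))) :
    Finset (EuclideanSpace ℝ (Fin d)) :=
  G.biUnion id

/-- `𝒞` is a finite collection of pairwise disjoint nonempty clusters. -/
def IsClusterCollection {d : ℕ} (𝒞 : Finset (Finset (EuclideanSpace ℝ (Fin d)))) : Prop :=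
  (∀ C ∈ 𝒞, C.Nonempty) ∧ (∀ C ∈ 𝒞, ∀ D ∈ 𝒞, C ≠ D → Disjoint C D)

/-- `𝒢` is a grouping of `𝒞`: a partition of `𝒞` into nonempty groups. -/
def IsGrouping {d : ℕ} (𝒞 : Finset (Finset (EuclideanSpace ℝ (Fin d))))
    (𝒢 : Finset (Finset (Finset (EuclideanSpace ℝ (Fin d))))) : Prop :=
  (∀ G ∈ 𝒢, G.Nonempty) ∧
  (∀ G ∈ 𝒢, ∀ H ∈ 𝒢, G ≠ H → Disjoint G H) ∧
  𝒢.biUnion id = 𝒞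

/-- The regularized set k-means (grouping) energy:
`E_g(𝒞,𝒢,λ_g) = λ_g Σ_G 1/|G| + Σ_G Σ_{C ∈ G} |C| ‖ḡ − c̄‖²`. -/
noncomputable def groupEnergy {d : ℕ}
    (𝒢 : Finset (Finset (Finset (EuclideanSpace ℝ (Fin d))))) (lam : ℝ) : ℝ :=
  lam * ∑ G ∈ 𝒢, (groupSize G : ℝ)⁻¹ +
    ∑ G ∈ 𝒢, ∑ C ∈ G, (C.card : ℝ) * ‖centroid (groupUnion G) - centroid C‖ ^ 2

section helpers

variable {d : ℕ}

lemma card_smul_centroid (C : Finset (EuclideanSpace ℝ (Fin d))) :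
    (C.card : ℝ) • centroid C = ∑ x ∈ C, x := by
  rcases C.eq_empty_or_nonempty with rfl | h
  · simp
  · have : (C.card : ℝ) ≠ 0 := by exact_mod_cast h.card_pos.ne'
    rw [centroid, smul_inv_smul₀ this]

lemma groupSize_smul_centroid (G : Finset (Finset (EuclideanSpace ℝ (Fin d))))
    (hG : ∀ C ∈ G, ∀ D ∈ G, C ≠ D → Disjoint C D) :
    (groupSize G : ℝ) • centroid (groupUnion G) = ∑ C ∈ G, (C.card : ℝ) • centroid C := by
  have hdisj : Set.PairwiseDisjoint (G : Set (Finset (EuclideanSpace ℝ (Fin d)))) id :=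
    fun C hC D hD h => hG C hC D hD h
  have hcard : groupSize G = (groupUnion G).card := by
    rw [groupSize, groupUnion, Finset.card_biUnion hdisj]
    rfl
  rw [hcard, card_smul_centroid, groupUnion, Finset.sum_biUnion hdisj]
  exact Finset.sum_congr rfl fun C _ => (card_smul_centroid C).symm

/-- Parallel axis (Huygens–Steiner) identity: moving the reference point of a weighted sum of
squared distances away from the barycentre `h` to `g` costs the total weight times `‖g - h‖²`. -/
lemma sum_weighted_sq_shift {ι E : Type*} [NormedAddCommGroup E] [InnerProductSpace ℝ E]
    (s : Finset ι) (w : ι → ℝ) (c : ι → E) (g h : E)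
    (hh : (∑ i ∈ s, w i) • h = ∑ i ∈ s, w i • c i) :
    ∑ i ∈ s, w i * ‖g - c i‖ ^ 2 =
      ∑ i ∈ s, w i * ‖h - c i‖ ^ 2 + (∑ i ∈ s, w i) * ‖g - h‖ ^ 2 := by
  have hcross : ∑ i ∈ s, w i * inner ℝ (g - h) (h - c i) = 0 := by
    have hz : ∑ i ∈ s, w i • (h - c i) = 0 := by
      simp only [smul_sub, Finset.sum_sub_distrib, ← Finset.sum_smul, hh, sub_self]
    simp only [← inner_smul_right, ← inner_sum, hz, inner_zero_right]
  have hterm : ∀ i, w i * ‖g - c i‖ ^ 2 =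
      w i * ‖h - c i‖ ^ 2 + w i * ‖g - h‖ ^ 2 + 2 * (w i * inner ℝ (g - h) (h - c i)) := by
    intro i
    rw [← sub_add_sub_cancel g h (c i), norm_add_sq_real]
    ring
  simp only [hterm, Finset.sum_add_distrib, ← Finset.mul_sum, ← Finset.sum_mul, hcross]
  ring

/-- The contribution of a single group `G` to the grouping energy. -/
noncomputable def groupCost (lam : ℝ) (G : Finset (Finset (EuclideanSpace ℝ (Fin d)))) : ℝ :=
  lam * (groupSize G : ℝ)⁻¹ +
    ∑ C ∈ G, (C.card : ℝ) * ‖centroid (groupUnion G) - centroid C‖ ^ 2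

lemma groupEnergy_eq_sum_groupCost
    (𝒢 : Finset (Finset (Finset (EuclideanSpace ℝ (Fin d))))) (lam : ℝ) :
    groupEnergy 𝒢 lam = ∑ G ∈ 𝒢, groupCost lam G := by
  simp only [groupEnergy, groupCost, Finset.sum_add_distrib, Finset.mul_sum]

lemma groupUnion_singleton (C : Finset (EuclideanSpace ℝ (Fin d))) :
    groupUnion {C} = C := by
  simp [groupUnion]

/-- In a minimizing grouping, splitting one cluster off its group does not lower the cost. -/
lemma groupCost_le_split {𝒞 : Finset (Finset (EuclideanSpace ℝ (Fin d)))} {lam : ℝ}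
    {𝒢 : Finset (Finset (Finset (EuclideanSpace ℝ (Fin d))))}
    (hgrp : IsGrouping 𝒞 𝒢)
    (hmin : ∀ 𝒢' : Finset (Finset (Finset (EuclideanSpace ℝ (Fin d)))),
      IsGrouping 𝒞 𝒢' → groupEnergy 𝒢 lam ≤ groupEnergy 𝒢' lam)
    {G : Finset (Finset (EuclideanSpace ℝ (Fin d)))} (hG : G ∈ 𝒢)
    {C : Finset (EuclideanSpace ℝ (Fin d))} (hC : C ∈ G) (hne : (G.erase C).Nonempty) :
    groupCost lam G ≤ groupCost lam {C} + groupCost lam (G.erase C) := by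
  obtain ⟨hnonempty, hdisj, hunion⟩ := hgrp
  have hsingle : ∀ K ∈ 𝒢.erase G, Disjoint {C} K := fun K hK =>
    (hdisj G hG K (Finset.mem_of_mem_erase hK) (Finset.ne_of_mem_erase hK).symm).mono_left
      (by simpa using hC)
  have hrest : ∀ K ∈ 𝒢.erase G, Disjoint (G.erase C) K := fun K hK =>
    (hdisj G hG K (Finset.mem_of_mem_erase hK) (Finset.ne_of_mem_erase hK).symm).mono_left
      (Finset.erase_subset _ _)
  have hparts : Disjoint {C} (G.erase C) := by simp
  have hn2 : G.erase C ∉ 𝒢.erase G := fun h =>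
    hne.ne_empty (Finset.disjoint_self_iff_empty _ |>.1 (hrest _ h))
  have hn1 : {C} ∉ insert (G.erase C) (𝒢.erase G) := by
    intro h
    have hself : Disjoint ({C} : Finset (Finset (EuclideanSpace ℝ (Fin d)))) {C} := by
      rcases Finset.mem_insert.1 h with h | h
      · nth_rewrite 2 [h]
        exact hparts
      · exact hsingle _ h
    simp at hself
  have hgrp' : IsGrouping 𝒞 (insert {C} (insert (G.erase C) (𝒢.erase G))) := by
    refine ⟨?_, ?_, ?_⟩
    · intro K hK
      rcases Finset.mem_insert.1 hK with rfl | hK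
      · simp
      rcases Finset.mem_insert.1 hK with rfl | hK
      · exact hne
      · exact hnonempty K (Finset.mem_of_mem_erase hK)
    · intro K hK L hL hKL
      simp only [Finset.mem_insert] at hK hL
      rcases hK with rfl | rfl | hK <;> rcases hL with rfl | rfl | hL
      · exact absurd rfl hKL
      · exact hparts
      · exact hsingle L hL
      · exact hparts.symm
      · exact absurd rfl hKL
      · exact hrest L hL
      · exact (hsingle K hK).symm
      · exact (hrest K hK).symm
      · exact hdisj K (Finset.mem_of_mem_erase hK) L (Finset.mem_of_mem_erase hL) hKL
    · rw [← hunion, Finset.biUnion_insert, Finset.biUnion_insert, ← Finset.union_assoc]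
      have hglue : id {C} ∪ id (G.erase C) = id G := by
        simpa using Finset.insert_erase hC
      rw [hglue, ← Finset.biUnion_insert, Finset.insert_erase hG]
  have h := hmin _ hgrp'
  rw [groupEnergy_eq_sum_groupCost, groupEnergy_eq_sum_groupCost, Finset.sum_insert hn1,
    Finset.sum_insert hn2, ← Finset.add_sum_erase 𝒢 _ hG] at h
  linarith

end helpers

/-- Lemma 4.3: for a minimizing grouping, the centroid of every cluster `C` in a group `G`
is within squared distance `λ_g (1/|C|² − 1/(|C||G|) + 1/|G|²) ≤ λ_g/|C|²` of the group
centroid. -/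
theorem stmt2 {d : ℕ} (𝒞 : Finset (Finset (EuclideanSpace ℝ (Fin d))))
    (h𝒞 : IsClusterCollection 𝒞) (lamg : ℝ) (hlam : 0 < lamg)
    (𝒢 : Finset (Finset (Finset (EuclideanSpace ℝ (Fin d)))))
    (hgrp : IsGrouping 𝒞 𝒢)
    (hmin : ∀ 𝒢' : Finset (Finset (Finset (EuclideanSpace ℝ (Fin d)))),
      IsGrouping 𝒞 𝒢' → groupEnergy 𝒢 lamg ≤ groupEnergy 𝒢' lamg) :
    ∀ G ∈ 𝒢, ∀ C ∈ G,
      ‖centroid (groupUnion G) - centroid C‖ ^ 2 ≤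
          lamg * (1 / (C.card : ℝ) ^ 2 - 1 / ((C.card : ℝ) * (groupSize G : ℝ)) +
            1 / (groupSize G : ℝ) ^ 2) ∧
      lamg * (1 / (C.card : ℝ) ^ 2 - 1 / ((C.card : ℝ) * (groupSize G : ℝ)) +
          1 / (groupSize G : ℝ) ^ 2) ≤ lamg / (C.card : ℝ) ^ 2 := by
  intro G hG C hC
  have hGsub : ∀ D ∈ G, D ∈ 𝒞 := fun D hD => by
    rw [← hgrp.2.2]
    exact Finset.mem_biUnion.2 ⟨G, hG, hD⟩
  have hGdisj : ∀ D ∈ G, ∀ D' ∈ G, D ≠ D' → Disjoint D D' := fun D hD D' hD' h =>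
    h𝒞.2 D (hGsub D hD) D' (hGsub D' hD') h
  have hm : (0 : ℝ) < C.card := by exact_mod_cast (h𝒞.1 C (hGsub C hC)).card_pos
  have hsize : (groupSize G : ℝ) = C.card + groupSize (G.erase C) := by
    rw [groupSize, groupSize, ← Finset.add_sum_erase G _ hC]
    push_cast
    rfl
  have hr0 : (0 : ℝ) ≤ groupSize (G.erase C) := Nat.cast_nonneg _
  constructor
  · rcases (G.erase C).eq_empty_or_nonempty with he | hne
    · have hGC : G = {C} := by rw [← Finset.insert_erase hC, he]; rfl
      subst hGC
      have hs : groupSize {C} = C.card := by simp [groupSize]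
      rw [groupUnion_singleton, hs, sub_self, norm_zero, ← sq]
      have : 0 ≤ lamg * (1 / (C.card : ℝ) ^ 2) :=
        mul_nonneg hlam.le (one_div_nonneg.2 (sq_nonneg _))
      simpa using this
    · have hr : (0 : ℝ) < groupSize (G.erase C) := by
        obtain ⟨D, hD⟩ := hne
        have h1 := (h𝒞.1 D (hGsub D (Finset.mem_of_mem_erase hD))).card_pos
        have h2 : D.card ≤ groupSize (G.erase C) :=
          Finset.single_le_sum (f := fun D => D.card) (fun _ _ => Nat.zero_le _) hD
        exact_mod_cast h1.trans_le h2
      have hsplit := groupCost_le_split hgrp hmin hG hC hne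
      have hcG := groupSize_smul_centroid G hGdisj
      have hcH := groupSize_smul_centroid (G.erase C) fun D hD D' hD' =>
        hGdisj D (Finset.mem_of_mem_erase hD) D' (Finset.mem_of_mem_erase hD')
      rw [← Finset.add_sum_erase G _ hC, ← hcH, hsize] at hcG
      have hw : (groupSize (G.erase C) : ℝ) = ∑ D ∈ G.erase C, (D.card : ℝ) := by
        simp [groupSize]
      have hshift := sum_weighted_sq_shift (G.erase C) (fun D => (D.card : ℝ)) centroid
        (centroid (groupUnion G)) (centroid (groupUnion (G.erase C))) (by rw [← hw, hcH])
      rw [← hw] at hshift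
      have hs : groupSize {C} = C.card := by simp [groupSize]
      simp only [groupCost, groupUnion_singleton, Finset.sum_singleton, sub_self, norm_zero, hs]
        at hsplit
      rw [← Finset.add_sum_erase G _ hC, hshift, hsize] at hsplit
      rw [hsize]
      generalize centroid (groupUnion G) = g at *
      generalize centroid (groupUnion (G.erase C)) = h at *
      generalize centroid C = c at *
      generalize (groupSize (G.erase C) : ℝ) = r at *
      generalize (C.card : ℝ) = m at *
      have hbal : r • (g - h) = -(m • (g - c)) := by
        rw [smul_sub, smul_sub, eq_neg_iff_add_eq_zero, sub_add_sub_comm, ← add_smul, add_comm r m,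
          hcG, add_comm]
        abel
      have hnorm : r ^ 2 * ‖g - h‖ ^ 2 = m ^ 2 * ‖g - c‖ ^ 2 := by
        have := congrArg (fun v => ‖v‖ ^ 2) hbal
        simpa [norm_neg, norm_smul, mul_pow] using this
      have hgh : r * ‖g - h‖ ^ 2 = m ^ 2 / r * ‖g - c‖ ^ 2 := by
        field_simp
        linarith
      have hdrop : (m + m ^ 2 / r) * ‖g - c‖ ^ 2 ≤ lamg * (m⁻¹ + r⁻¹ - (m + r)⁻¹) := by
        linarith
      have hfac : lamg * (m⁻¹ + r⁻¹ - (m + r)⁻¹) = (m + m ^ 2 / r) *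
          (lamg * (1 / m ^ 2 - 1 / (m * (m + r)) + 1 / (m + r) ^ 2)) := by
        field_simp
        ring
      rw [hfac] at hdrop
      exact le_of_mul_le_mul_left hdrop (by positivity)
  · have hn : (0 : ℝ) < groupSize G := by linarith
    have hle : 1 / (groupSize G : ℝ) ^ 2 ≤ 1 / ((C.card : ℝ) * groupSize G) :=
      one_div_le_one_div_of_le (by positivity) (by nlinarith)
    rw [div_eq_mul_one_div lamg]
    exact mul_le_mul_of_nonneg_left (by linarith) hlam.le
end

section
/- Let 𝒞 be a finite collection of pairwise disjoint nonempty finite subsets of ℝ^d such that Var(C) = 0 for every C ∈ 𝒞, and let λ_g > 0. Then for every grouping 𝒢 of 𝒞, the regularized set k-means energy equals the regularized k-means energy of the induced partition: E_g(𝒞,𝒢,λ_g) = E(X, 𝒢̃, λ_g), where X = ⋃_{C∈𝒞} C and 𝒢̃ = { ⋃_{C∈G} C : G ∈ 𝒢 } is the partition of X into the unions of the groups. -/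
/-!
In a cluster `C` of zero variance every point equals the centroid `c̄`, so for any point `g` the sum
`∑ x ∈ C, ‖g - x‖ ^ 2` is `|C| ‖g - c̄‖ ^ 2` (`sum_norm_sub_sq_of_clVar_eq_zero`). The clusters of a
group are disjoint, so the size of the group is the cardinality of its union and a sum over the
union splits into sums over the clusters. The energies therefore agree group by group. As the
induced partition is the *set* of unions, one also needs that distinct groups have distinct unions
(`groupUnion_injOn`).
-/

open scoped BigOperators Classical

/-- In a cluster of zero variance every point coincides with the centroid. -/
lemma eq_centroid_of_clVar_eq_zero {d : ℕ} {C : Finset (EuclideanSpace ℝ (Fin d))}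
    (h : clVar C = 0) {x : EuclideanSpace ℝ (Fin d)} (hx : x ∈ C) : x = centroid C := by
  have hcard : (C.card : ℝ)⁻¹ ≠ 0 :=
    inv_ne_zero (Nat.cast_ne_zero.mpr (Finset.card_ne_zero_of_mem hx))
  have hsum : ∑ y ∈ C, ‖centroid C - y‖ ^ 2 = 0 := (mul_eq_zero.mp h).resolve_left hcard
  have hxx := (Finset.sum_eq_zero_iff_of_nonneg (fun y _ => sq_nonneg _)).mp hsum x hx
  exact (sub_eq_zero.mp (norm_eq_zero.mp (pow_eq_zero_iff two_ne_zero |>.mp hxx))).symm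

lemma sum_norm_sub_sq_of_clVar_eq_zero {d : ℕ} {C : Finset (EuclideanSpace ℝ (Fin d))}
    (h : clVar C = 0) (g : EuclideanSpace ℝ (Fin d)) :
    ∑ x ∈ C, ‖g - x‖ ^ 2 = (C.card : ℝ) * ‖g - centroid C‖ ^ 2 := by
  rw [← nsmul_eq_mul, ← Finset.sum_const]
  exact Finset.sum_congr rfl fun x hx => by rw [← eq_centroid_of_clVar_eq_zero h hx]

/-- Distinct groups have distinct unions: a point of a cluster of `G` that also lies in the union
of `H` lies in a cluster of `H`, which is the same cluster by disjointness, so `G` and `H` meet. -/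
lemma groupUnion_injOn {d : ℕ} {𝒞 : Finset (Finset (EuclideanSpace ℝ (Fin d)))}
    {𝒢 : Finset (Finset (Finset (EuclideanSpace ℝ (Fin d))))}
    (h𝒞 : IsClusterCollection 𝒞) (hgrp : IsGrouping 𝒞 𝒢) :
    Set.InjOn groupUnion (𝒢 : Set (Finset (Finset (EuclideanSpace ℝ (Fin d))))) := by
  obtain ⟨hne, hdisj, rfl⟩ := hgrp
  intro G hG H hH hGH
  obtain ⟨C, hC⟩ := hne G hG
  have hC' : C ∈ 𝒢.biUnion id := Finset.mem_biUnion.mpr ⟨G, hG, hC⟩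
  obtain ⟨x, hx⟩ := h𝒞.1 C hC'
  have hxH : x ∈ groupUnion H := hGH ▸ Finset.mem_biUnion.mpr ⟨C, hC, hx⟩
  obtain ⟨D, hD, hxD⟩ := Finset.mem_biUnion.mp hxH
  have hCD : C = D := by
    by_contra hCD
    exact Finset.disjoint_left.mp
      (h𝒞.2 C hC' D (Finset.mem_biUnion.mpr ⟨H, hH, hD⟩) hCD) hx hxD
  by_contra hne'
  exact Finset.disjoint_left.mp (hdisj G hG H hH hne') hC (hCD ▸ hD)

/-- Theorem 4.6: if every cluster in `𝒞` has zero variance, then for every grouping `𝒢`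
of `𝒞` the regularized set k-means energy equals the regularized k-means energy of the
induced partition `𝒢̃ = { ⋃_{C∈G} C : G ∈ 𝒢 }`. -/
theorem stmt6 {d : ℕ} (𝒞 : Finset (Finset (EuclideanSpace ℝ (Fin d))))
    (h𝒞 : IsClusterCollection 𝒞)
    (hvar : ∀ C ∈ 𝒞, clVar C = 0)
    (lamg : ℝ) (hlam : 0 < lamg)
    (𝒢 : Finset (Finset (Finset (EuclideanSpace ℝ (Fin d)))))
    (hgrp : IsGrouping 𝒞 𝒢) :
    groupEnergy 𝒢 lamg = energy (𝒢.image groupUnion) lamg := by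
  have hmem : ∀ G ∈ 𝒢, ∀ C ∈ G, C ∈ 𝒞 := fun G hG C hC =>
    hgrp.2.2 ▸ Finset.mem_biUnion.mpr ⟨G, hG, hC⟩
  have hpd : ∀ G ∈ 𝒢, (G : Set (Finset (EuclideanSpace ℝ (Fin d)))).PairwiseDisjoint id :=
    fun G hG C hC D hD hCD => h𝒞.2 C (hmem G hG C hC) D (hmem G hG D hD) hCD
  have hinj := groupUnion_injOn h𝒞 hgrp
  unfold groupEnergy energy
  rw [Finset.sum_image hinj, Finset.sum_image hinj]
  congr 1
  · congr 1
    refine Finset.sum_congr rfl fun G hG => ?_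
    rw [groupSize, groupUnion, Finset.card_biUnion (hpd G hG)]
    rfl
  · refine Finset.sum_congr rfl fun G hG => ?_
    -- only the domain of summation is split into clusters; the centroid is kept fixed
    generalize centroid (groupUnion G) = g
    rw [groupUnion, Finset.sum_biUnion (hpd G hG)]
    exact Finset.sum_congr rfl fun C hC =>
      (sum_norm_sub_sq_of_clVar_eq_zero (hvar C (hmem G hG C hC)) g).symm
end

section
/- Let λ_g > 0, ω ∈ (0,1), and λ_c = ω·λ_g. Let C ⊆ G be nonempty finite subsets of ℝ^d with centroids c̄ and ḡ, with |G| ≥ max(|C|, 2), and let x ∈ C. Suppose ‖c̄ − x‖² ≤ λ_c, ‖ḡ − c̄‖² ≤ λ_g/|C|², and (1 − ω)|C| − 2√ω ≥ 1. Then λ_g ( 1 − 1/|G| + 1/|G|² ) ≥ ‖ḡ − x‖²; consequently, removing x from G to form a new singleton cluster does not decrease the regularized k-means energy with parameter λ_g, i.e., λ_g [ 1/(|G|−1) − 1/|G| + 1 ] − (|G|/(|G|−1)) ‖ḡ − x‖² ≥ 0. -/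
/-!
By the triangle inequality, `‖ḡ - x‖ ≤ √λ_g (1/|C| + √ω)`. Put `s = 1/|C|` and `t = 1/|G|`.
Dividing the hypothesis `(1 - ω)|C| - 2√ω ≥ 1` by `|C|` says `ω + 2√ω s ≤ 1 - s`, so
`(s + √ω)² ≤ 1 - s + s²`. The hypothesis also forces `|C| ≥ 2`, hence `t ≤ s ≤ 1/2`, and
`u ↦ 1 - u + u²` is decreasing on `[0, 1/2]`, which gives the first bound. The energy change equals
`|G|/(|G| - 1)` times the slack in that bound.
-/

open scoped BigOperators Classical

/-- Triangle inequality in squared form, for distances bounded relative to the scale `√l`. -/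
lemma sq_norm_sub_le_of_sq_le {E : Type*} [SeminormedAddCommGroup E] {a b c : E} {l s r : ℝ}
    (hl : 0 ≤ l) (hs : 0 ≤ s) (hr : 0 ≤ r) (hab : ‖a - b‖ ^ 2 ≤ l * s ^ 2)
    (hbc : ‖b - c‖ ^ 2 ≤ l * r ^ 2) : ‖a - c‖ ^ 2 ≤ l * (s + r) ^ 2 := by
  have hsq : √l ^ 2 = l := Real.sq_sqrt hl
  have hab' : ‖a - b‖ ≤ √l * s := by
    refine (abs_le_of_sq_le_sq' ?_ (by positivity)).2
    rwa [mul_pow, hsq]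
  have hbc' : ‖b - c‖ ≤ √l * r := by
    refine (abs_le_of_sq_le_sq' ?_ (by positivity)).2
    rwa [mul_pow, hsq]
  calc ‖a - c‖ ^ 2 ≤ (√l * (s + r)) ^ 2 := by
        gcongr
        linarith [norm_sub_le_norm_sub_add_norm_sub a b c]
    _ = l * (s + r) ^ 2 := by rw [mul_pow, hsq]

/-- Theorem 4.9 (stability of `k`): if `λ_c = ω λ_g`, `x ∈ C ⊆ G`, `|G| ≥ max(|C|,2)`,
`‖c̄ − x‖² ≤ λ_c`, `‖ḡ − c̄‖² ≤ λ_g/|C|²`, and `(1 − ω)|C| − 2√ω ≥ 1`, then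
`λ_g (1 − 1/|G| + 1/|G|²) ≥ ‖ḡ − x‖²`; consequently removing `x` from `G` to form a new
singleton cluster does not decrease the regularized k-means energy with parameter `λ_g`. -/
theorem stmt12 {d : ℕ} (lamg ω : ℝ) (hlam : 0 < lamg) (hω : ω ∈ Set.Ioo (0 : ℝ) 1)
    (lamc : ℝ) (hlamc : lamc = ω * lamg)
    (C G : Finset (EuclideanSpace ℝ (Fin d))) (hCne : C.Nonempty) (hCG : C ⊆ G)
    (hGcard : max C.card 2 ≤ G.card)
    (x : EuclideanSpace ℝ (Fin d)) (hx : x ∈ C)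
    (h1 : ‖centroid C - x‖ ^ 2 ≤ lamc)
    (h2 : ‖centroid G - centroid C‖ ^ 2 ≤ lamg / (C.card : ℝ) ^ 2)
    (hcond : (1 - ω) * (C.card : ℝ) - 2 * Real.sqrt ω ≥ 1) :
    lamg * (1 - 1 / (G.card : ℝ) + 1 / (G.card : ℝ) ^ 2) ≥ ‖centroid G - x‖ ^ 2 ∧
    lamg * (1 / ((G.card : ℝ) - 1) - 1 / (G.card : ℝ) + 1) -
        (G.card : ℝ) / ((G.card : ℝ) - 1) * ‖centroid G - x‖ ^ 2 ≥ 0 := by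
  have hr0 : 0 ≤ √ω := Real.sqrt_nonneg ω
  have hr2 : √ω ^ 2 = ω := Real.sq_sqrt hω.1.le
  have hCG' : C.card ≤ G.card := (le_max_left _ _).trans hGcard
  have hG2 : (2 : ℝ) ≤ G.card := by exact_mod_cast (le_max_right _ _).trans hGcard
  have hC0 : (0 : ℝ) < C.card := by exact_mod_cast hCne.card_pos
  have hC2 : (2 : ℝ) ≤ C.card := by
    have hC1 : (1 : ℝ) < C.card := by nlinarith [mul_pos hω.1 hC0]
    exact_mod_cast (show 1 < C.card by exact_mod_cast hC1)
  have hnorm : ‖centroid G - x‖ ^ 2 ≤ lamg * (1 / (C.card : ℝ) + √ω) ^ 2 := by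
    refine sq_norm_sub_le_of_sq_le (b := centroid C) hlam.le (by positivity) hr0 ?_ ?_
    · rwa [one_div, inv_pow, ← div_eq_mul_inv]
    · rwa [hr2, mul_comm, ← hlamc]
  have hts : 1 / (G.card : ℝ) ≤ 1 / (C.card : ℝ) :=
    one_div_le_one_div_of_le hC0 (by exact_mod_cast hCG')
  have hs : 1 / (C.card : ℝ) ≤ 1 / 2 := one_div_le_one_div_of_le two_pos hC2
  have hcond' : ω + 2 * √ω * (1 / (C.card : ℝ)) ≤ 1 - 1 / (C.card : ℝ) := by
    have h := mul_le_mul_of_nonneg_right hcond (one_div_pos.mpr hC0).le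
    have hn : (C.card : ℝ) * (1 / (C.card : ℝ)) = 1 := mul_one_div_cancel hC0.ne'
    linear_combination h + (1 - ω) * hn
  have hmain : ‖centroid G - x‖ ^ 2 ≤
      lamg * (1 - 1 / (G.card : ℝ) + 1 / (G.card : ℝ) ^ 2) := by
    refine hnorm.trans (mul_le_mul_of_nonneg_left ?_ hlam.le)
    rw [← one_div_pow]
    -- `(1 - t + t²) - (1 - s + s²) = (s - t)(1 - s - t)` with `t ≤ s ≤ 1/2`
    have hmono := mul_nonneg (sub_nonneg.mpr hts)
      (show 0 ≤ 1 - 1 / (C.card : ℝ) - 1 / (G.card : ℝ) by linarith)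
    linear_combination hcond' + hmono + hr2
  refine ⟨hmain, ?_⟩
  have hG0 : (G.card : ℝ) ≠ 0 := by linarith
  have hG1 : 0 < (G.card : ℝ) - 1 := by linarith
  have hfactor : lamg * (1 / ((G.card : ℝ) - 1) - 1 / (G.card : ℝ) + 1) -
      (G.card : ℝ) / ((G.card : ℝ) - 1) * ‖centroid G - x‖ ^ 2 =
      (G.card : ℝ) / ((G.card : ℝ) - 1) *
        (lamg * (1 - 1 / (G.card : ℝ) + 1 / (G.card : ℝ) ^ 2) - ‖centroid G - x‖ ^ 2) := by
    have hG1' := hG1.ne'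
    field_simp
    ring
  rw [hfactor]
  exact mul_nonneg (by positivity) (sub_nonneg.mpr hmain)
end

section
/- Let G_i, G_j ⊂ ℝ^d be disjoint nonempty finite sets with |G_i| ≥ 2, centroids ḡ_i, ḡ_j, and let λ_g > 0. Suppose γ > 0 satisfies λ_g [ 1/(|G_i|² − |G_i|) − 1/(|G_j|² + |G_j|) ] + (|G_j|/(|G_j|+1)) ‖ḡ_j − ḡ_i‖² = (2|G_j|/(|G_j|+1)) ‖ḡ_j − ḡ_i‖ γ + ((|G_i|+|G_j|)/((|G_i|−1)(|G_j|+1))) γ². Then for every x ∈ G_i with ‖ḡ_i − x‖ ≤ γ, moving x from G_i to G_j does not decrease the regularized k-means energy with parameter λ_g, i.e., λ_g/(|G_i|(|G_i|−1)) − λ_g/(|G_j|(|G_j|+1)) + (|G_j|/(|G_j|+1)) ‖ḡ_j − x‖² − (|G_i|/(|G_i|−1)) ‖ḡ_i − x‖² ≥ 0. -/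
/-!
Write `a = |G_i|`, `b = |G_j|`, `D = ‖ḡ_j − ḡ_i‖` and `r = ‖ḡ_i − x‖`. The reverse triangle
inequality gives `‖ḡ_j − x‖² ≥ (D − r)²`, so the energy change is at least
`λ (1/(a² − a) − 1/(b² + b)) + b/(b+1) D² − (2b/(b+1) D r + (a+b)/((a−1)(b+1)) r²)`,
using `b/(b+1) − a/(a−1) = −(a+b)/((a−1)(b+1))`. The subtracted polynomial is nondecreasing in
`r ≥ 0`, and the equation for `γ` says that the bound vanishes at `r = γ`; hence it is
nonnegative for `r ≤ γ`.
-/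

open scoped BigOperators Classical

/-- Theorem 4.10: if `γ > 0` satisfies equation (7), then no point of `G_i` within
distance `γ` of the centroid `ḡ_i` can be moved to `G_j` with a decrease in the
regularized k-means energy. -/
theorem stmt14 {d : ℕ} (Gi Gj : Finset (EuclideanSpace ℝ (Fin d)))
    (hi : Gi.Nonempty) (hj : Gj.Nonempty) (hd : Disjoint Gi Gj) (hGi2 : 2 ≤ Gi.card)
    (lamg : ℝ) (hlam : 0 < lamg)
    (γ : ℝ) (hγpos : 0 < γ)
    (hγ : lamg * (1 / ((Gi.card : ℝ) ^ 2 - (Gi.card : ℝ)) -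
            1 / ((Gj.card : ℝ) ^ 2 + (Gj.card : ℝ))) +
          (Gj.card : ℝ) / ((Gj.card : ℝ) + 1) * ‖centroid Gj - centroid Gi‖ ^ 2 =
        2 * (Gj.card : ℝ) / ((Gj.card : ℝ) + 1) * ‖centroid Gj - centroid Gi‖ * γ +
          ((Gi.card : ℝ) + (Gj.card : ℝ)) / (((Gi.card : ℝ) - 1) * ((Gj.card : ℝ) + 1)) *
            γ ^ 2) :
    ∀ x ∈ Gi, ‖centroid Gi - x‖ ≤ γ →
      lamg / ((Gi.card : ℝ) * ((Gi.card : ℝ) - 1)) -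
          lamg / ((Gj.card : ℝ) * ((Gj.card : ℝ) + 1)) +
          (Gj.card : ℝ) / ((Gj.card : ℝ) + 1) * ‖centroid Gj - x‖ ^ 2 -
          (Gi.card : ℝ) / ((Gi.card : ℝ) - 1) * ‖centroid Gi - x‖ ^ 2 ≥ 0 := by
  intro x _ hx
  have ha : (2 : ℝ) ≤ (Gi.card : ℝ) := by exact_mod_cast hGi2
  have hb : (0 : ℝ) < (Gj.card : ℝ) := by exact_mod_cast hj.card_pos
  have htri : |‖centroid Gj - centroid Gi‖ - ‖centroid Gi - x‖| ≤ ‖centroid Gj - x‖ := by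
    have h := abs_norm_sub_norm_le (centroid Gj - centroid Gi) (x - centroid Gi)
    rwa [sub_sub_sub_cancel_right, norm_sub_rev x] at h
  have hr := norm_nonneg (centroid Gi - x)
  have hD := norm_nonneg (centroid Gj - centroid Gi)
  generalize ‖centroid Gj - centroid Gi‖ = D at *
  generalize ‖centroid Gi - x‖ = r at *
  generalize ‖centroid Gj - x‖ = e at *
  generalize (Gi.card : ℝ) = a at *
  generalize (Gj.card : ℝ) = b at *
  have hsq : (D - r) ^ 2 ≤ e ^ 2 := sq_le_sq' (by linarith [neg_abs_le (D - r)])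
    ((le_abs_self _).trans htri)
  have ha1 : 0 < a - 1 := by linarith
  have hb1 : 0 < b + 1 := by linarith
  have hE : b / (b + 1) * (D - r) ^ 2 ≤ b / (b + 1) * e ^ 2 := by gcongr
  have hlin : 2 * b / (b + 1) * D * r ≤ 2 * b / (b + 1) * D * γ := by gcongr
  have hquad : (a + b) / ((a - 1) * (b + 1)) * r ^ 2 ≤
      (a + b) / ((a - 1) * (b + 1)) * γ ^ 2 := by
    have : 0 ≤ (a + b) / ((a - 1) * (b + 1)) := by
      have : 0 < a + b := by linarith
      positivity
    gcongr
  have hsplit : b / (b + 1) * (D - r) ^ 2 - a / (a - 1) * r ^ 2 =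
      b / (b + 1) * D ^ 2 - 2 * b / (b + 1) * D * r -
        (a + b) / ((a - 1) * (b + 1)) * r ^ 2 := by
    field_simp
    ring
  have hlamEq : lamg * (1 / (a ^ 2 - a) - 1 / (b ^ 2 + b)) =
      lamg / (a * (a - 1)) - lamg / (b * (b + 1)) := by
    rw [show a ^ 2 - a = a * (a - 1) by ring, show b ^ 2 + b = b * (b + 1) by ring]
    ring
  linarith
end

section
/- Let G_i, G_j ⊂ ℝ^d be disjoint nonempty finite sets with |G_i| ≥ 2, centroids ḡ_i, ḡ_j, and let λ_g > 0. Suppose γ > 0 satisfies λ_g [ 1/(|G_i|² − |G_i|) − 1/(|G_j|² + |G_j|) ] + (|G_j|/(|G_j|+1)) ‖ḡ_j − ḡ_i‖² = (2|G_j|/(|G_j|+1)) ‖ḡ_j − ḡ_i‖ γ + ((|G_i|+|G_j|)/((|G_i|−1)(|G_j|+1))) γ². Let C ⊆ G_i be nonempty with centroid c̄ and set ρ = max_{x∈C} ‖c̄ − x‖. If ρ ≤ γ − ‖ḡ_i − c̄‖, then for every x ∈ C, moving x from G_i to G_j does not decrease the regularized k-means energy with parameter λ_g, i.e., λ_g/(|G_i|(|G_i|−1))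 − λ_g/(|G_j|(|G_j|+1)) + (|G_j|/(|G_j|+1)) ‖ḡ_j − x‖² − (|G_i|/(|G_i|−1)) ‖ḡ_i − x‖² ≥ 0. -/
/-!
Write `a = |G_i|`, `b = |G_j|`, `D = ‖ḡ_j - ḡ_i‖`, and for `x ∈ C` put `r = ‖ḡ_i - x‖`,
`s = ‖ḡ_j - x‖`. The triangle inequality through `c̄` gives `r ≤ ‖ḡ_i - c̄‖ + ρ ≤ γ`, and the
reverse triangle inequality gives `s² ≥ (D - r)²`. Since
`(a + b) / ((a - 1) (b + 1)) = a / (a - 1) - b / (b + 1) =: k ≥ 0`, the equation for `γ` turns the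
energy change into a quantity bounded below by `2 b / (b + 1) D (γ - r) + k (γ² - r²) ≥ 0`.
-/

open scoped BigOperators Classical

/-- The one-dimensional core of the argument: `a`, `b` are the cluster sizes, `D` the distance
between the centroids, and `r`, `s` the distances from the moved point to the old and the new
centroid. -/
lemma energy_change_nonneg {a b lam D r s γ : ℝ} (ha : 2 ≤ a) (hb : 1 ≤ b) (hD : 0 ≤ D)
    (hr : 0 ≤ r) (hrγ : r ≤ γ) (hs : |D - r| ≤ s)
    (hγ : lam * (1 / (a ^ 2 - a) - 1 / (b ^ 2 + b)) + b / (b + 1) * D ^ 2 =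
      2 * b / (b + 1) * D * γ + (a + b) / ((a - 1) * (b + 1)) * γ ^ 2) :
    0 ≤ lam / (a * (a - 1)) - lam / (b * (b + 1)) + b / (b + 1) * s ^ 2 -
      a / (a - 1) * r ^ 2 := by
  have ha1 : 0 < a - 1 := by linarith
  have hb1 : 0 < b + 1 := by linarith
  have hk : (a + b) / ((a - 1) * (b + 1)) = a / (a - 1) - b / (b + 1) := by
    field_simp
    ring
  have hk0 : 0 ≤ a / (a - 1) - b / (b + 1) := by
    rw [← hk]
    exact div_nonneg (by linarith) (by positivity)
  have hL : lam * (1 / (a ^ 2 - a) - 1 / (b ^ 2 + b)) =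
      lam / (a * (a - 1)) - lam / (b * (b + 1)) := by
    rw [show a ^ 2 - a = a * (a - 1) by ring, show b ^ 2 + b = b * (b + 1) by ring]
    ring
  rw [hL, hk, show 2 * b / (b + 1) = 2 * (b / (b + 1)) by ring] at hγ
  have ht0 : 0 ≤ b / (b + 1) := by positivity
  have hs2 : (D - r) ^ 2 ≤ s ^ 2 := sq_le_sq.2 (hs.trans (le_abs_self s))
  have h1 := mul_le_mul_of_nonneg_left hs2 ht0
  have h2 : 0 ≤ b / (b + 1) * (D * (γ - r)) :=
    mul_nonneg ht0 (mul_nonneg hD (sub_nonneg.2 hrγ))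
  have h3 : 0 ≤ (a / (a - 1) - b / (b + 1)) * (γ ^ 2 - r ^ 2) :=
    mul_nonneg hk0 (sub_nonneg.2 (pow_le_pow_left₀ hr hrγ 2))
  linarith

/-- Corollary 4.11: if `γ > 0` satisfies equation (7), `C ⊆ G_i` is nonempty with
`ρ = max_{x∈C} ‖c̄ − x‖`, and `ρ ≤ γ − ‖ḡ_i − c̄‖`, then moving any `x ∈ C` from `G_i`
to `G_j` does not decrease the regularized k-means energy. -/
theorem stmt15 {d : ℕ} (Gi Gj : Finset (EuclideanSpace ℝ (Fin d)))
    (hi : Gi.Nonempty) (hj : Gj.Nonempty) (hd : Disjoint Gi Gj) (hGi2 : 2 ≤ Gi.card)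
    (lamg : ℝ) (hlam : 0 < lamg)
    (γ : ℝ) (hγpos : 0 < γ)
    (hγ : lamg * (1 / ((Gi.card : ℝ) ^ 2 - (Gi.card : ℝ)) -
            1 / ((Gj.card : ℝ) ^ 2 + (Gj.card : ℝ))) +
          (Gj.card : ℝ) / ((Gj.card : ℝ) + 1) * ‖centroid Gj - centroid Gi‖ ^ 2 =
        2 * (Gj.card : ℝ) / ((Gj.card : ℝ) + 1) * ‖centroid Gj - centroid Gi‖ * γ +
          ((Gi.card : ℝ) + (Gj.card : ℝ)) / (((Gi.card : ℝ) - 1) * ((Gj.card : ℝ) + 1)) *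
            γ ^ 2)
    (C : Finset (EuclideanSpace ℝ (Fin d))) (hCne : C.Nonempty) (hCGi : C ⊆ Gi)
    (ρ : ℝ) (hρ : ρ = C.sup' hCne fun x => ‖centroid C - x‖)
    (hργ : ρ ≤ γ - ‖centroid Gi - centroid C‖) :
    ∀ x ∈ C,
      lamg / ((Gi.card : ℝ) * ((Gi.card : ℝ) - 1)) -
          lamg / ((Gj.card : ℝ) * ((Gj.card : ℝ) + 1)) +
          (Gj.card : ℝ) / ((Gj.card : ℝ) + 1) * ‖centroid Gj - x‖ ^ 2 -
          (Gi.card : ℝ) / ((Gi.card : ℝ) - 1) * ‖centroid Gi - x‖ ^ 2 ≥ 0 := by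
  intro x hx
  have hxρ : ‖centroid C - x‖ ≤ ρ := by
    rw [hρ]
    exact Finset.le_sup' (fun x => ‖centroid C - x‖) hx
  have hrγ : ‖centroid Gi - x‖ ≤ γ := by
    linarith [norm_sub_le_norm_sub_add_norm_sub (centroid Gi) (centroid C) x]
  have hs : |‖centroid Gj - centroid Gi‖ - ‖centroid Gi - x‖| ≤ ‖centroid Gj - x‖ := by
    have h := abs_norm_sub_norm_le (centroid Gj - centroid Gi) (x - centroid Gi)
    rwa [sub_sub_sub_cancel_right, norm_sub_rev x] at h
  exact energy_change_nonneg (by exact_mod_cast hGi2) (by exact_mod_cast hj.card_pos)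
    (norm_nonneg _) (norm_nonneg _) hrγ hs hγ
end
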